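/- arXiv:1701.03453 — 9 statements merged into one kernel-verified Lean document; each statement's English description precedes it below -/
import Mathlib

section
/- For any finite simple graph G = (V, E), the neighborhood polynomial satisfies N(G,x) = Σ_{v ∈ V} (1+x)^{deg v} − Σ_{W ⊆ V, |W| ≥ 2} (−1)^{|W|} (1+x)^{|⋂_{w ∈ W} N(w)|}. -/
/-!
The neighborhood complex is the union over `v` of the power sets of the sets `N(v)`, so its
complement is the intersection of the complements of these power sets. Inclusion-exclusion
(`Finset.inclusion_exclusion_sum_inf_compl`) with weight `x ^ |X|` applies: an intersection of
power sets is the power set of the intersection, and the total weight of the power set of `A` is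
`(1 + x) ^ |A|` by the binomial theorem. The `W = ∅` term is the weight of all subsets of `V`
(the empty intersection being `V`), which cancels, and the singletons give the degree sum.
-/

/- The neighborhood complex of a graph `G`: the family of all subsets of open
neighborhoods of vertices of `G`. -/
open Classical in
noncomputable def nbhdComplex {V : Type*} [Fintype V] (G : SimpleGraph V) :
    Finset (Finset V) :=
  Finset.univ.filter fun X => ∃ v : V, ∀ u ∈ X, G.Adj v u

/- The neighborhood polynomial of `G`, evaluated at `x`. -/
noncomputable def nbhdPoly {V : Type*} [Fintype V] (G : SimpleGraph V) (x : ℤ) : ℤ :=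
  ∑ X ∈ nbhdComplex G, x ^ X.card

lemma sum_powerset_pow_card {V : Type*} (A : Finset V) (x : ℤ) :
    ∑ X ∈ A.powerset, x ^ X.card = (1 + x) ^ A.card := by
  simpa [add_comm] using Finset.sum_pow_mul_eq_add_pow x 1 A

open Classical in
lemma inf_powerset_eq {V : Type*} [Fintype V] (N : V → Finset V) (W : Finset V) :
    (W.inf fun w => (N w).powerset) = (W.inf N).powerset := by
  ext X
  simp only [Finset.mem_inf, Finset.mem_powerset]
  exact Finset.le_inf_iff.symm

/-- A sum over all finsets, split into the empty set, the singletons, and the rest. -/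
lemma sum_finset_split {V : Type*} [Fintype V] (f : Finset V → ℤ) :
    ∑ W, f W = f ∅ + ∑ v, f {v} + ∑ W with 2 ≤ W.card, f W := by
  classical
  have hsmall : (Finset.univ.filter fun W : Finset V => ¬ 2 ≤ W.card) =
      insert ∅ (Finset.univ.image fun v : V => ({v} : Finset V)) := by
    ext W
    simp only [Finset.mem_filter, Finset.mem_univ, true_and, Finset.mem_insert,
      Finset.mem_image]
    constructor
    · intro h
      have h' : W.card = 0 ∨ W.card = 1 := by omega
      rcases h' with h' | h'
      · exact Or.inl (Finset.card_eq_zero.mp h')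
      · obtain ⟨v, rfl⟩ := Finset.card_eq_one.mp h'
        exact Or.inr ⟨v, rfl⟩
    · rintro (rfl | ⟨v, rfl⟩) <;> simp
  rw [← Finset.sum_filter_not_add_sum_filter Finset.univ (fun W : Finset V => 2 ≤ W.card), hsmall,
    Finset.sum_insert (by simp), Finset.sum_image Finset.singleton_injective.injOn]

open Classical in
theorem neighborhood_poly_inclusion_exclusion {V : Type*} [Fintype V]
    (G : SimpleGraph V) [DecidableRel G.Adj] (x : ℤ) :
    nbhdPoly G x =
      (∑ v : V, (1 + x) ^ G.degree v) -
        ∑ W ∈ Finset.univ.filter (fun W : Finset V => 2 ≤ W.card),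
          (-1 : ℤ) ^ W.card * (1 + x) ^ (W.inf fun w => G.neighborFinset w).card := by
  have key := Finset.inclusion_exclusion_sum_inf_compl Finset.univ
    (fun v : V => (G.neighborFinset v).powerset) (fun X : Finset V => x ^ X.card)
  have hcompl : (Finset.univ.inf fun v : V => (G.neighborFinset v).powersetᶜ) =
      (nbhdComplex G)ᶜ := by
    ext X
    simp [nbhdComplex, Finset.mem_inf, Finset.subset_iff]
  have htotal : nbhdPoly G x + ∑ X ∈ (nbhdComplex G)ᶜ, x ^ X.card =
      (1 + x) ^ Fintype.card V := by
    rw [nbhdPoly, Finset.sum_add_sum_compl, ← Finset.powerset_univ, sum_powerset_pow_card,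
      Finset.card_univ]
  rw [hcompl, Finset.powerset_univ] at key
  simp only [inf_powerset_eq, sum_powerset_pow_card, smul_eq_mul] at key
  rw [sum_finset_split] at key
  simp only [Finset.card_empty, pow_zero, Finset.inf_empty, Finset.top_eq_univ, Finset.card_univ,
    Finset.card_singleton, pow_one, Finset.inf_singleton, SimpleGraph.card_neighborFinset_eq_degree,
    one_mul, neg_one_mul, Finset.sum_neg_distrib] at key
  linarith
end

section
/- Let G = (V, E) be a finite simple graph with E ≠ ∅ that is not the disjoint union of a complete bipartite graph and an edgeless graph. Then Σ_{F ⊆ E} (−1)^{|F|} N(G − F, x) = 0, where G − F denotes the spanning subgraph (V, E \ F). -/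
/-- An alternating sum over the subsets satisfying `P` vanishes when `P` ignores one element `e`. -/
lemma sum_powerset_neg_one_pow_mul_eq_zero {α : Type*} [DecidableEq α] {E : Finset α} {e : α}
    (he : e ∈ E) (P : Finset α → Prop) [DecidablePred P] (c : ℤ)
    (hP : ∀ F, P (insert e F) ↔ P F) :
    ∑ F ∈ E.powerset, (if P F then (-1 : ℤ) ^ F.card * c else 0) = 0 := by
  rw [← Finset.insert_erase he, Finset.sum_powerset_insert (Finset.notMem_erase e E),
    ← Finset.sum_add_distrib]
  refine Finset.sum_eq_zero fun F hF => ?_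
  have heF : e ∉ F := fun h => Finset.notMem_erase e E (Finset.mem_powerset.1 hF h)
  rw [Finset.card_insert_of_notMem heF, pow_succ]
  simp only [hP F]
  split_ifs <;> ring

/-- Some edge of `G` does not join `X` to a common neighbor of `X`. -/
lemma exists_edge_irrelevant {V : Type*} (G : SimpleGraph V) (hE : G.edgeSet ≠ ∅)
    (hnot : ¬ ∃ A B : Set V, A.Nonempty ∧ B.Nonempty ∧ Disjoint A B ∧
      ∀ u v : V, G.Adj u v ↔ (u ∈ A ∧ v ∈ B) ∨ (u ∈ B ∧ v ∈ A))
    (X : Finset V) :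
    ∃ e ∈ G.edgeSet, ∀ v : V, (∀ u ∈ X, G.Adj v u) → ∀ u ∈ X, s(v, u) ≠ e := by
  by_contra! h
  have key : ∀ u v : V, G.Adj u v ↔
      (u ∈ {t | ∀ u ∈ X, G.Adj t u} ∧ v ∈ (X : Set V)) ∨
        (u ∈ (X : Set V) ∧ v ∈ {t | ∀ u ∈ X, G.Adj t u}) := by
    intro u v
    constructor
    · intro huv
      obtain ⟨t, ht, w, hw, he⟩ := h s(u, v) huv
      rcases Sym2.eq_iff.1 he with ⟨rfl, rfl⟩ | ⟨rfl, rfl⟩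
      · exact Or.inl ⟨ht, hw⟩
      · exact Or.inr ⟨hw, ht⟩
    · rintro (⟨hu, hv⟩ | ⟨hu, hv⟩)
      · exact hu v hv
      · exact (hv u hu).symm
  obtain ⟨e, he⟩ := Set.nonempty_iff_ne_empty.2 hE
  obtain ⟨t, ht, w, hw, -⟩ := h e he
  refine hnot ⟨{t | ∀ u ∈ X, G.Adj t u}, X, ⟨t, ht⟩, ⟨w, hw⟩, ?_, key⟩
  exact Set.disjoint_left.2 fun a ha haX => G.loopless.irrefl a (ha a haX)

open Classical in
theorem alternating_sum_nbhdPoly_eq_zero {V : Type*} [Fintype V] (G : SimpleGraph V)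
    (hE : G.edgeSet ≠ ∅)
    (hnot : ¬ ∃ A B : Set V, A.Nonempty ∧ B.Nonempty ∧ Disjoint A B ∧
      ∀ u v : V, G.Adj u v ↔ (u ∈ A ∧ v ∈ B) ∨ (u ∈ B ∧ v ∈ A))
    (x : ℤ) :
    ∑ F ∈ G.edgeFinset.powerset,
      (-1 : ℤ) ^ F.card *
        nbhdPoly (SimpleGraph.fromEdgeSet (↑(G.edgeFinset \ F) : Set (Sym2 V))) x = 0 := by
  simp only [nbhdPoly, nbhdComplex, Finset.sum_filter, Finset.mul_sum, mul_ite, mul_zero]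
  rw [Finset.sum_comm]
  refine Finset.sum_eq_zero fun X _ => ?_
  obtain ⟨e, he, hirr⟩ := exists_edge_irrelevant G hE hnot X
  refine sum_powerset_neg_one_pow_mul_eq_zero (SimpleGraph.mem_edgeFinset.2 he) _ _ fun F => ?_
  refine exists_congr fun v => ?_
  simp only [SimpleGraph.fromEdgeSet_adj, Finset.mem_coe, Finset.mem_sdiff,
    SimpleGraph.mem_edgeFinset, SimpleGraph.mem_edgeSet, Finset.mem_insert, not_or]
  constructor
  · intro h u hu
    exact ⟨⟨(h u hu).1.1, (h u hu).1.2.2⟩, (h u hu).2⟩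
  · intro h u hu
    exact ⟨⟨(h u hu).1.1, hirr v (fun w hw => (h w hw).1.1) u hu, (h u hu).1.2⟩, (h u hu).2⟩
end

section
/- Let k, r be positive integers and {E₁, …, E_r} a partition of a finite set E into exactly r blocks, each of size k. Let ℱ(k,r) = {A ⊆ E : ∃ j ∈ {1,…,r}, E_j ⊆ A}. Then Σ_{A ∈ ℱ(k,r)} (−1)^{|A|} = (−1)^{kr − r + 1}. -/
/-!
The alternating sum over all subsets of the nonempty set `E` vanishes, so the sum over the sets
containing some block is minus the sum over the sets containing no block. A set containing no block
is a free choice of a proper subset of each block, so the latter sum factors over the blocks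
(`sum_avoiding_blocks`); each factor is `0 - (-1) ^ k`, the sum over all subsets of a block of
size `k` minus the term of the full block. The result is `-(-(-1) ^ k) ^ r`, which has the same sign
as `(-1) ^ (k * r - r + 1)`.
-/

lemma sum_powerset_disjoint_union {α : Type*} [DecidableEq α] (X Y : Finset α)
    (h : Disjoint X Y) (f : Finset α → ℤ) :
    ∑ A ∈ (X ∪ Y).powerset, f A = ∑ B ∈ X.powerset, ∑ C ∈ Y.powerset, f (B ∪ C) := by
  rw [← Finset.sum_product']
  have hXY : ∀ x, x ∈ X → x ∉ Y := fun x hx hy => Finset.disjoint_left.mp h hx hy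
  refine Finset.sum_nbij' (fun A => (A ∩ X, A ∩ Y)) (fun p => p.1 ∪ p.2) ?_ ?_ ?_ ?_ ?_
  · intro A _
    simp
  · rintro ⟨B, C⟩ hBC
    simp only [Finset.mem_product, Finset.mem_powerset] at hBC ⊢
    exact Finset.union_subset_union hBC.1 hBC.2
  · intro A hA
    rw [Finset.mem_powerset] at hA
    simp only [← Finset.inter_union_distrib_left]
    exact Finset.inter_eq_left.mpr hA
  · rintro ⟨B, C⟩ hBC
    simp only [Finset.mem_product, Finset.mem_powerset] at hBC
    obtain ⟨hB, hC⟩ := hBC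
    ext x <;> grind
  · intro A hA
    rw [Finset.mem_powerset] at hA
    simp only [← Finset.inter_union_distrib_left]
    rw [Finset.inter_eq_left.mpr hA]

lemma sum_proper_subsets {α : Type*} [DecidableEq α] (X : Finset α) (hX : X.Nonempty) :
    ∑ A ∈ X.powerset, (if X ⊆ A then 0 else (-1 : ℤ) ^ A.card) = -(-1) ^ X.card := by
  have h0 := Finset.sum_powerset_neg_one_pow_card_of_nonempty hX
  rw [← Finset.add_sum_erase _ _ (Finset.mem_powerset_self X)] at h0 ⊢
  have h1 : ∑ A ∈ X.powerset.erase X, (if X ⊆ A then 0 else (-1 : ℤ) ^ A.card)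
      = ∑ A ∈ X.powerset.erase X, (-1 : ℤ) ^ A.card := by
    refine Finset.sum_congr rfl fun A hA => if_neg fun h => ?_
    rw [Finset.mem_erase, Finset.mem_powerset] at hA
    exact hA.1 (hA.2.antisymm h)
  rw [h1, if_pos subset_rfl]
  linarith

open Classical in
/-- The alternating sum over the sets containing no block factors over the blocks. -/
lemma sum_avoiding_blocks {α ι : Type*} [DecidableEq α] (P : ι → Finset α)
    (hdisj : ∀ i j, i ≠ j → Disjoint (P i) (P j)) (hne : ∀ i, (P i).Nonempty) (s : Finset ι) :
    ∑ A ∈ (s.biUnion P).powerset, (if ∃ j ∈ s, P j ⊆ A then 0 else (-1 : ℤ) ^ A.card)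
      = ∏ j ∈ s, (-(-1) ^ (P j).card) := by
  induction s using Finset.induction_on with
  | empty => simp
  | insert a s ha ih =>
    have hd : Disjoint (P a) (s.biUnion P) := by
      rw [Finset.disjoint_biUnion_right]
      intro i hi
      exact hdisj a i (fun h => ha (h ▸ hi))
    rw [Finset.biUnion_insert, sum_powerset_disjoint_union _ _ hd, Finset.prod_insert ha, ← ih,
      ← sum_proper_subsets (P a) (hne a), Finset.sum_mul_sum]
    refine Finset.sum_congr rfl fun B hB => Finset.sum_congr rfl fun C hC => ?_
    rw [Finset.mem_powerset] at hB hC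
    have hBC : Disjoint B C :=
      Finset.disjoint_of_subset_left hB (Finset.disjoint_of_subset_right hC hd)
    have h1 : P a ⊆ B ∪ C ↔ P a ⊆ B :=
      ⟨fun h => Disjoint.left_le_of_le_sup_right h (Finset.disjoint_of_subset_right hC hd),
        fun h => h.trans Finset.subset_union_left⟩
    have h2 : ∀ j ∈ s, (P j ⊆ B ∪ C ↔ P j ⊆ C) := fun j hj =>
      ⟨fun h => Disjoint.left_le_of_le_sup_left h
          (Finset.disjoint_of_subset_right hB (hdisj j a (fun h => ha (h ▸ hj)))),
        fun h => h.trans Finset.subset_union_right⟩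
    have h3 : (∃ j ∈ insert a s, P j ⊆ B ∪ C) ↔ (P a ⊆ B ∨ ∃ j ∈ s, P j ⊆ C) := by
      rw [Finset.exists_mem_insert, h1]
      exact or_congr_right (exists_congr fun j => and_congr_right fun hj => h2 j hj)
    rw [if_congr h3 rfl rfl, Finset.card_union_of_disjoint hBC, pow_add]
    by_cases p : P a ⊆ B <;> by_cases q : ∃ j ∈ s, P j ⊆ C <;> simp only [p, q] <;> simp

open Classical in
theorem alternating_sum_sets_containing_a_block {α : Type*} [Fintype α] [DecidableEq α]
    (k r : ℕ) (hk : 0 < k) (hr : 0 < r) (E : Finset α) (P : Fin r → Finset α)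
    (hdisj : ∀ i j : Fin r, i ≠ j → Disjoint (P i) (P j))
    (hcard : ∀ i : Fin r, (P i).card = k)
    (hcover : Finset.univ.biUnion P = E) :
    ∑ A ∈ E.powerset.filter (fun A => ∃ j : Fin r, P j ⊆ A),
      (-1 : ℤ) ^ A.card = (-1 : ℤ) ^ (k * r - r + 1) := by
  have hne : ∀ i, (P i).Nonempty := fun i => Finset.card_pos.mp (by rw [hcard]; exact hk)
  have hE : E.Nonempty := by
    obtain ⟨x, hx⟩ := hne ⟨0, hr⟩
    exact ⟨x, hcover ▸ Finset.mem_biUnion.mpr ⟨_, Finset.mem_univ _, hx⟩⟩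
  have h0 := Finset.sum_powerset_neg_one_pow_card_of_nonempty hE
  have h1 := sum_avoiding_blocks P hdisj hne Finset.univ
  rw [hcover] at h1
  simp only [Finset.mem_univ, true_and, hcard, Finset.prod_const, Finset.card_univ,
    Fintype.card_fin] at h1
  rw [← Finset.sum_filter_add_sum_filter_not _ (fun A => ∃ j : Fin r, P j ⊆ A)] at h0
  rw [Finset.sum_ite, Finset.sum_const_zero, zero_add] at h1
  rw [h1] at h0
  rw [eq_neg_of_add_eq_zero_left h0]
  -- With `k = m + 1` the truncated subtraction `k * r - r` is `m * r`.
  obtain ⟨m, rfl⟩ : ∃ m, k = m + 1 := ⟨k - 1, by omega⟩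
  have h2 : (m + 1) * r - r = m * r := by rw [Nat.add_mul, one_mul, Nat.add_sub_cancel]
  rw [h2, pow_succ, pow_succ, pow_mul]
  simp
end

section
/- Let G = (V, E) = K_{p,q} be a complete bipartite graph with p + q vertices (p, q ≥ 1). Then Σ_{F ⊆ E} (−1)^{|F|} N(G − F, x) = (−1)^{q−1} x^p + (−1)^{p−1} x^q, where G − F denotes the spanning subgraph (V, E \ F). -/
open Classical in
/-- If `E` is indexed by `α × β` through `e`, the signed number of `F ⊆ E` such that some `b` has
all its edges to `X` outside `F` is zero unless `X` is everything. -/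
lemma signed_count_common_nbr {α β ε : Type*} [Fintype α] [Fintype β] [Nonempty α] [Nonempty β]
    (E : Finset ε) (e : α → β → ε) (he : ∀ a b a' b', e a b = e a' b' → a = a' ∧ b = b')
    (hE : ∀ s, s ∈ E ↔ ∃ a b, e a b = s) (X : Finset α) :
    ∑ F ∈ E.powerset, (-1 : ℤ) ^ F.card * (if ∃ b, ∀ a ∈ X, e a b ∉ F then 1 else 0) =
      if X = Finset.univ then (-1 : ℤ) ^ (Fintype.card β - 1) else 0 := by
  have hEne : E ≠ ∅ := by
    obtain ⟨a⟩ := ‹Nonempty α›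
    obtain ⟨b⟩ := ‹Nonempty β›
    exact Finset.ne_empty_of_mem ((hE (e a b)).2 ⟨a, b, rfl⟩)
  have h_incl_excl : ∀ F : Finset ε, (if ∃ b, ∀ a ∈ X, e a b ∉ F then (1 : ℤ) else 0) =
      1 - ∑ T : Finset β, (-1 : ℤ) ^ T.card *
        (if ∀ b ∈ T, ∀ a ∈ X, e a b ∉ F then 1 else 0) := by
    intro F
    have h1 : ∏ b : β, (1 - (if ∀ a ∈ X, e a b ∉ F then (1 : ℤ) else 0)) =
        ∑ T : Finset β, (-1 : ℤ) ^ T.card *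
          (if ∀ b ∈ T, ∀ a ∈ X, e a b ∉ F then 1 else 0) := by
      simp only [sub_eq_add_neg]
      rw [Finset.prod_one_add, Finset.powerset_univ]
      refine Finset.sum_congr rfl fun T _ => ?_
      rw [Finset.prod_neg, Finset.prod_ite_zero]
      simp
    rw [← h1]
    split_ifs with h
    · obtain ⟨b, hb⟩ := h
      rw [Finset.prod_eq_zero (Finset.mem_univ b) (by rw [if_pos hb]; rfl)]
      rfl
    · push Not at h
      rw [Finset.prod_eq_one]
      · rfl
      · intro b _
        obtain ⟨a, ha, hF⟩ := h b
        rw [if_neg (fun h' => h' a ha hF)]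
        rfl
  have h_inner : ∀ T : Finset β, ∑ F ∈ E.powerset, (-1 : ℤ) ^ F.card *
      (if ∀ b ∈ T, ∀ a ∈ X, e a b ∉ F then 1 else 0) =
      if X = Finset.univ ∧ T = Finset.univ then 1 else 0 := by
    intro T
    have h1 : E.powerset.filter (fun F => ∀ b ∈ T, ∀ a ∈ X, e a b ∉ F) =
        (E.filter fun s => ∀ b ∈ T, ∀ a ∈ X, e a b ≠ s).powerset := by
      ext F
      simp only [Finset.mem_filter, Finset.mem_powerset, Finset.subset_iff]
      grind
    simp only [mul_ite, mul_one, mul_zero]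
    rw [← Finset.sum_filter, h1, Finset.sum_powerset_neg_one_pow_card]
    refine if_congr ?_ rfl rfl
    simp only [Finset.filter_eq_empty_iff, Finset.eq_univ_iff_forall]
    constructor
    · intro h
      have h2 : ∀ a b, a ∈ X ∧ b ∈ T := by
        intro a b
        have := h ((hE (e a b)).2 ⟨a, b, rfl⟩)
        push Not at this
        obtain ⟨b', hb', a', ha', h3⟩ := this
        obtain ⟨rfl, rfl⟩ := he _ _ _ _ h3
        exact ⟨ha', hb'⟩
      obtain ⟨a⟩ := ‹Nonempty α›
      obtain ⟨b⟩ := ‹Nonempty β›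
      exact ⟨fun a => (h2 a b).1, fun b => (h2 a b).2⟩
    · rintro ⟨hX, hT⟩ s hs h
      obtain ⟨a, b, rfl⟩ := (hE s).1 hs
      exact h b (hT b) a (hX a) rfl
  simp only [h_incl_excl, mul_sub, mul_one, Finset.sum_sub_distrib]
  rw [Finset.sum_powerset_neg_one_pow_card, if_neg hEne]
  simp only [Finset.mul_sum]
  rw [Finset.sum_comm]
  have h2 : ∀ T : Finset β, ∑ F ∈ E.powerset, (-1 : ℤ) ^ F.card * ((-1 : ℤ) ^ T.card *
      (if ∀ b ∈ T, ∀ a ∈ X, e a b ∉ F then 1 else 0)) =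
      if T = Finset.univ then (if X = Finset.univ then (-1 : ℤ) ^ T.card else 0) else 0 := by
    intro T
    simp only [mul_left_comm _ ((-1 : ℤ) ^ T.card)]
    rw [← Finset.mul_sum, h_inner]
    split_ifs <;> simp_all
  simp only [h2]
  rw [Finset.sum_ite_eq' Finset.univ, if_pos (Finset.mem_univ _), Finset.card_univ]
  split_ifs
  · obtain ⟨n, hn⟩ := Nat.exists_eq_succ_of_ne_zero (Fintype.card_ne_zero (α := β))
    rw [hn]
    simp [pow_succ]
  · rfl

open Classical in
theorem alternating_sum_nbhdPoly_completeBipartite (p q : ℕ) (hp : 1 ≤ p) (hq : 1 ≤ q)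
    (x : ℤ) :
    ∑ F ∈ (completeBipartiteGraph (Fin p) (Fin q)).edgeFinset.powerset,
      (-1 : ℤ) ^ F.card *
        nbhdPoly (SimpleGraph.fromEdgeSet
          (↑((completeBipartiteGraph (Fin p) (Fin q)).edgeFinset \ F) :
            Set (Sym2 (Fin p ⊕ Fin q)))) x =
      (-1 : ℤ) ^ (q - 1) * x ^ p + (-1 : ℤ) ^ (p - 1) * x ^ q := by
  have : Nonempty (Fin p) := ⟨⟨0, hp⟩⟩
  have : Nonempty (Fin q) := ⟨⟨0, hq⟩⟩
  set E := (completeBipartiteGraph (Fin p) (Fin q)).edgeFinset with hEdef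
  have hE : ∀ s, s ∈ E ↔ ∃ (a : Fin p) (b : Fin q), s(Sum.inl a, Sum.inr b) = s := by
    intro s
    induction s with
    | _ u v =>
      rw [hEdef, SimpleGraph.mem_edgeFinset, SimpleGraph.mem_edgeSet]
      rcases u with u | u <;> rcases v with v | v <;> simp
  have hE' : ∀ s, s ∈ E ↔ ∃ (b : Fin q) (a : Fin p), s(Sum.inl a, Sum.inr b) = s := by
    intro s
    rw [hE, exists_comm]
  have hEne : E ≠ ∅ :=
    Finset.ne_empty_of_mem ((hE _).2 ⟨⟨0, hp⟩, ⟨0, hq⟩, rfl⟩)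
  have hL : ∀ A : Finset (Fin p), ∑ F ∈ E.powerset, (-1 : ℤ) ^ F.card *
      (if ∃ b : Fin q, ∀ a ∈ A, s(Sum.inl a, Sum.inr b) ∉ F then 1 else 0) =
      if A = Finset.univ then (-1 : ℤ) ^ (q - 1) else 0 := by
    intro A
    convert signed_count_common_nbr E (fun (a : Fin p) (b : Fin q) => s(Sum.inl a, Sum.inr b))
      (by simp) hE A
    simp
  have hR : ∀ B : Finset (Fin q), ∑ F ∈ E.powerset, (-1 : ℤ) ^ F.card *
      (if ∃ a : Fin p, ∀ b ∈ B, s(Sum.inl a, Sum.inr b) ∉ F then 1 else 0) =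
      if B = Finset.univ then (-1 : ℤ) ^ (p - 1) else 0 := by
    intro B
    convert signed_count_common_nbr E (fun (b : Fin q) (a : Fin p) => s(Sum.inl a, Sum.inr b))
      (by simp) hE' B
    simp
  have h_ind : ∀ (F : Finset (Sym2 (Fin p ⊕ Fin q))) (X : Finset (Fin p ⊕ Fin q)),
      (if ∃ v, ∀ u ∈ X, (SimpleGraph.fromEdgeSet
          (↑(E \ F) : Set (Sym2 (Fin p ⊕ Fin q)))).Adj v u then (1 : ℤ) else 0) =
      (if X.toRight = ∅ then 1 else 0) *
          (if ∃ b, ∀ a ∈ X.toLeft, s(Sum.inl a, Sum.inr b) ∉ F then 1 else 0) +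
        (if X.toLeft = ∅ then 1 else 0) *
          (if ∃ a, ∀ b ∈ X.toRight, s(Sum.inl a, Sum.inr b) ∉ F then 1 else 0) -
        (if X = ∅ then 1 else 0) := by
    intro F X
    have h1 : (∃ v, ∀ u ∈ X, (SimpleGraph.fromEdgeSet
          (↑(E \ F) : Set (Sym2 (Fin p ⊕ Fin q)))).Adj v u) ↔
        (X.toRight = ∅ ∧ ∃ b, ∀ a ∈ X.toLeft, s(Sum.inl a, Sum.inr b) ∉ F) ∨
        (X.toLeft = ∅ ∧ ∃ a, ∀ b ∈ X.toRight, s(Sum.inl a, Sum.inr b) ∉ F) := by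
      simp only [Sum.exists, Sum.forall, SimpleGraph.fromEdgeSet_adj, Finset.coe_sdiff,
        Set.mem_sdiff, Finset.mem_coe, hE, Finset.eq_empty_iff_forall_notMem,
        Finset.mem_toLeft, Finset.mem_toRight]
      rw [or_comm]
      refine or_congr ?_ ?_
      · have h_swap : ∀ (a : Fin p) (b : Fin q),
            (s(Sum.inr b, Sum.inl a) : Sym2 (Fin p ⊕ Fin q)) = s(Sum.inl a, Sum.inr b) :=
          fun a b => Sym2.eq_swap
        simp [h_swap, and_comm]
      · simp
    have h2 : X = ∅ ↔ X.toLeft = ∅ ∧ X.toRight = ∅ := by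
      simp [Finset.eq_empty_iff_forall_notMem]
    simp only [h1, h2]
    by_cases hl : X.toLeft = ∅ <;> by_cases hr : X.toRight = ∅ <;> simp [hl, hr]
  have h_coeff : ∀ X : Finset (Fin p ⊕ Fin q), ∑ F ∈ E.powerset, (-1 : ℤ) ^ F.card *
      (if ∃ v, ∀ u ∈ X, (SimpleGraph.fromEdgeSet
          (↑(E \ F) : Set (Sym2 (Fin p ⊕ Fin q)))).Adj v u then 1 else 0) =
      (if X = Finset.univ.disjSum ∅ then (-1 : ℤ) ^ (q - 1) else 0) +
      (if X = Finset.disjSum ∅ Finset.univ then (-1 : ℤ) ^ (p - 1) else 0) := by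
    intro X
    have h3 : ∀ A B, X = Finset.disjSum A B ↔ X.toLeft = A ∧ X.toRight = B := by
      intro A B
      constructor
      · rintro rfl
        simp
      · rintro ⟨rfl, rfl⟩
        exact Finset.toLeft_disjSum_toRight.symm
    simp only [h_ind, mul_add, mul_sub, Finset.sum_add_distrib, Finset.sum_sub_distrib]
    rw [← Finset.sum_mul, Finset.sum_powerset_neg_one_pow_card, if_neg hEne]
    simp only [mul_left_comm ((-1 : ℤ) ^ _)]
    rw [← Finset.mul_sum, ← Finset.mul_sum, hL, hR]
    simp only [h3]
    by_cases hl : X.toLeft = ∅ <;> by_cases hr : X.toRight = ∅ <;> simp [hl, hr]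
  have h_poly : ∀ F : Finset (Sym2 (Fin p ⊕ Fin q)), nbhdPoly (SimpleGraph.fromEdgeSet
      (↑(E \ F) : Set (Sym2 (Fin p ⊕ Fin q)))) x = ∑ X : Finset (Fin p ⊕ Fin q),
      (if ∃ v, ∀ u ∈ X, (SimpleGraph.fromEdgeSet
          (↑(E \ F) : Set (Sym2 (Fin p ⊕ Fin q)))).Adj v u then 1 else 0) * x ^ X.card := by
    intro F
    simp only [nbhdPoly, nbhdComplex, Finset.sum_filter, ite_mul, one_mul, zero_mul]
    refine Finset.sum_congr rfl fun X _ => ?_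
    congr
  simp only [h_poly, Finset.mul_sum]
  rw [Finset.sum_comm]
  simp only [← mul_assoc]
  simp only [← Finset.sum_mul, h_coeff, add_mul, Finset.sum_add_distrib, ite_mul, zero_mul]
  rw [Finset.sum_ite_eq' Finset.univ, Finset.sum_ite_eq' Finset.univ]
  simp
end

section
/- Let G = (V, E) be a finite simple graph of order n and let 𝐺̄ denote its complement. Then D(G, x) + N(𝐺̄, x) = (1 + x)^n. -/
/- `W` is a dominating set of `G`: every vertex is in `W` or adjacent to a vertex of `W`. -/
def IsDominatingSet {V : Type*} (G : SimpleGraph V) (W : Finset V) : Prop :=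
  ∀ v : V, v ∈ W ∨ ∃ w ∈ W, G.Adj w v

/- The family of all dominating sets of `G`. -/
open Classical in
noncomputable def domFamily {V : Type*} [Fintype V] (G : SimpleGraph V) :
    Finset (Finset V) :=
  Finset.univ.filter fun W => IsDominatingSet G W

/- The domination polynomial of `G`, evaluated at `x`. -/
noncomputable def domPoly {V : Type*} [Fintype V] (G : SimpleGraph V) (x : ℤ) : ℤ :=
  ∑ W ∈ domFamily G, x ^ W.card

/-- A set `X` fails to dominate `G` exactly when some vertex `v` lies outside `N[X]`, i.e. is
distinct from and non-adjacent in `G` to every element of `X`; this says `X ⊆ N(v)` in `Gᶜ`. -/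
theorem exists_forall_compl_adj_iff {V : Type*} (G : SimpleGraph V) (X : Finset V) :
    (∃ v : V, ∀ u ∈ X, Gᶜ.Adj v u) ↔ ¬ IsDominatingSet G X := by
  simp only [IsDominatingSet, SimpleGraph.compl_adj, not_forall, not_or, not_exists, not_and]
  refine exists_congr fun v => ⟨fun h => ⟨fun hv => (h v hv).1 rfl,
    fun w hw hwv => (h w hw).2 hwv.symm⟩, fun h u hu => ⟨?_, fun hvu => h.2 u hu hvu.symm⟩⟩
  rintro rfl
  exact h.1 hu

/-- The subsets of `V` split into the dominating sets of `G` and the members of the neighborhood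
complex of `Gᶜ`, so the two polynomials add up to `∑ X ⊆ V, x ^ |X| = (1 + x) ^ n`. -/
theorem domPoly_add_nbhdPoly_compl {V : Type*} [Fintype V] (G : SimpleGraph V) (x : ℤ) :
    domPoly G x + nbhdPoly Gᶜ x = (1 + x) ^ Fintype.card V := by
  classical
  simp only [domPoly, nbhdPoly, domFamily, nbhdComplex, exists_forall_compl_adj_iff]
  rw [Finset.sum_filter_add_sum_filter_not, add_comm 1 x]
  simpa using Fintype.sum_pow_mul_eq_add_pow V x 1
end

section
/- For any finite simple graph G of order n with complement 𝐺̄, the number of dominating sets of G satisfies d(G) = 2^n − N(𝐺̄, 1), where N(𝐺̄, 1) is the number of sets in the neighborhood complex of 𝐺̄. -/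
/- The number of dominating sets of `G`. -/
open Classical in
noncomputable def numDomSets {V : Type*} [Fintype V] (G : SimpleGraph V) : ℕ :=
  (Finset.univ.filter fun W : Finset V => IsDominatingSet G W).card

/-- A set fails to dominate `G` exactly when some vertex `v` lies outside its closed
neighborhood, i.e. when it is contained in the open neighborhood of `v` in `Gᶜ`. -/
lemma mem_nbhdComplex_compl_iff {V : Type*} [Fintype V] (G : SimpleGraph V) (W : Finset V) :
    W ∈ nbhdComplex Gᶜ ↔ ¬ IsDominatingSet G W := by
  simp only [nbhdComplex, IsDominatingSet, Finset.mem_filter, Finset.mem_univ, true_and,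
    SimpleGraph.compl_adj, not_forall, not_or, not_exists, not_and]
  refine exists_congr fun v => ⟨fun h => ⟨fun hv => (h v hv).1 rfl, fun w hw hwv =>
    (h w hw).2 hwv.symm⟩, fun h u hu => ⟨?_, fun hvu => h.2 u hu hvu.symm⟩⟩
  rintro rfl
  exact h.1 hu

theorem numDomSets_eq_two_pow_sub_card_nbhdComplex_compl {V : Type*} [Fintype V]
    (G : SimpleGraph V) :
    (numDomSets G : ℤ) = 2 ^ Fintype.card V - (nbhdComplex Gᶜ).card := by
  classical
  have hcompl : nbhdComplex Gᶜ =
      Finset.univ.filter fun W : Finset V => ¬ IsDominatingSet G W := by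
    ext W
    simp [mem_nbhdComplex_compl_iff]
  have hsum := Finset.card_filter_add_card_filter_not (s := (Finset.univ : Finset (Finset V)))
    (fun W => IsDominatingSet G W)
  rw [← hcompl, Finset.card_univ, Fintype.card_finset] at hsum
  have hnum : numDomSets G + (nbhdComplex Gᶜ).card = 2 ^ Fintype.card V := by
    rw [← hsum, numDomSets]
  rw [eq_sub_iff_add_eq]
  exact_mod_cast hnum
end

section
/- The number of dominating sets of any finite simple graph is odd. -/
/-- `B` is disjoint from the closed neighborhood of `A`. -/
def Separated {V : Type*} (G : SimpleGraph V) (A B : Finset V) : Prop :=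
  ∀ b ∈ B, ∀ a ∈ A, a ≠ b ∧ ¬ G.Adj a b

lemma Separated.symm {V : Type*} {G : SimpleGraph V} {A B : Finset V} (h : Separated G A B) :
    Separated G B A :=
  fun a ha b hb => ⟨(h b hb a ha).1.symm, fun hab => (h b hb a ha).2 hab.symm⟩

lemma Separated.eq_empty {V : Type*} {G : SimpleGraph V} {A : Finset V} (h : Separated G A A) :
    A = ∅ :=
  Finset.eq_empty_of_forall_notMem fun a ha => (h a ha a ha).1 rfl

open Classical in
lemma card_separated_zmod {V : Type*} [Fintype V] (G : SimpleGraph V) (A : Finset V) :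
    ((Finset.univ.filter fun B : Finset V => Separated G A B).card : ZMod 2) =
      if IsDominatingSet G A then 1 else 0 := by
  -- `U` is the complement of `N[A]`.
  set U : Finset V := Finset.univ.filter fun v => ∀ a ∈ A, a ≠ v ∧ ¬ G.Adj a v with hU
  have hpow : (Finset.univ.filter fun B : Finset V => Separated G A B) = U.powerset := by
    ext B
    rw [Finset.mem_filter_univ, Finset.mem_powerset, Finset.subset_iff]
    simp only [hU, Finset.mem_filter_univ, Separated]
  have hdom : IsDominatingSet G A ↔ U = ∅ := by
    rw [hU, Finset.filter_eq_empty_iff]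
    refine ⟨fun h v _ hv => ?_, fun h v => ?_⟩
    · rcases h v with hvA | ⟨w, hw, hwv⟩
      · exact (hv v hvA).1 rfl
      · exact (hv w hw).2 hwv
    · by_contra hv
      push Not at hv
      exact h (Finset.mem_univ v) fun a ha => ⟨fun hav => hv.1 (hav ▸ ha), hv.2 a ha⟩
  rw [hpow, Finset.card_powerset]
  have h2 : (2 : ZMod 2) = 0 := rfl
  split_ifs with h
  · simp [hdom.1 h]
  · have hne : U.card ≠ 0 := fun h0 => h (hdom.2 (Finset.card_eq_zero.1 h0))
    push_cast
    rw [h2, zero_pow hne]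

open Classical in
lemma sum_separated {V : Type*} [Fintype V] (G : SimpleGraph V) :
    ∑ p : Finset V × Finset V, (if Separated G p.1 p.2 then (1 : ZMod 2) else 0) = 1 := by
  rw [← Finset.add_sum_erase _ _ (Finset.mem_univ ((∅ : Finset V), (∅ : Finset V)))]
  have hempty : Separated G ∅ ∅ := by simp [Separated]
  have hswap (p : Finset V × Finset V) : Separated G p.2 p.1 ↔ Separated G p.1 p.2 :=
    ⟨Separated.symm, Separated.symm⟩
  rw [if_pos hempty, Finset.sum_involution (fun p _ => p.swap), add_zero]
  · intro p _
    simp only [Prod.fst_swap, Prod.snd_swap, hswap]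
    exact CharTwo.add_self_eq_zero _
  · rintro ⟨A, B⟩ hp hne heq
    have hAB : Separated G A B := by
      by_contra h
      exact hne (if_neg h)
    obtain rfl : B = A := congrArg Prod.fst heq
    simp [hAB.eq_empty] at hp
  · rintro ⟨A, B⟩ hp
    simp only [Finset.mem_erase, ne_eq, Prod.mk.injEq, Finset.mem_univ, and_true,
      Prod.swap_prod_mk] at hp ⊢
    tauto
  · intro p _
    exact Prod.swap_swap p

/-- The number of dominating sets of any finite simple graph is odd. -/
theorem odd_numDomSets {V : Type*} [Fintype V] (G : SimpleGraph V) :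
    Odd (numDomSets G) := by
  classical
  rw [← ZMod.natCast_eq_one_iff_odd, ← sum_separated G, Fintype.sum_prod_type, numDomSets,
    Finset.natCast_card_filter]
  refine Finset.sum_congr rfl fun A _ => ?_
  rw [← Finset.natCast_card_filter, card_separated_zmod]
end

section
/- Let G = (V, E) be a finite simple graph, let W ∈ 𝒩(G) be a member of the neighborhood complex of G, and define ℰ(W) = {F ⊆ E : W ∈ 𝒩((V,F))}. If there exists an edge e ∈ E not in the edge boundary ∂W of W, then Σ_{F ∈ ℰ(W)} (−1)^{|E| − |F|} = 0. -/
/-- Membership of `W` in the neighborhood complex of `(V, F)` depends only on the part of `F`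
lying in the edge boundary of `W`; here, on `F` away from a non-boundary edge `e`. -/
theorem mem_nbhdComplex_fromEdgeSet_iff_of_agree {V : Type*} [Fintype V] {W : Finset V}
    {e : Sym2 V} (hbd : ¬ ∃ u v : V, e = s(u, v) ∧ u ∈ W ∧ v ∉ W) {F F' : Finset (Sym2 V)}
    (h : ∀ x, x ≠ e → (x ∈ F ↔ x ∈ F')) :
    W ∈ nbhdComplex (SimpleGraph.fromEdgeSet (↑F : Set (Sym2 V))) ↔
      W ∈ nbhdComplex (SimpleGraph.fromEdgeSet (↑F' : Set (Sym2 V))) := by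
  simp only [nbhdComplex, Finset.mem_filter, Finset.mem_univ, true_and,
    SimpleGraph.fromEdgeSet_adj, Finset.mem_coe]
  refine exists_congr fun v => ?_
  by_cases hv : v ∈ W
  -- A vertex of `W` is never a witness, since the graphs have no loops.
  · exact ⟨fun H => absurd rfl (H v hv).2, fun H => absurd rfl (H v hv).2⟩
  · refine forall₂_congr fun u hu => and_congr_left fun _ => h _ fun heq => ?_
    exact hbd ⟨u, v, by rw [← heq, Sym2.eq_swap], hu, hv⟩

open Classical in
theorem alternating_sum_over_edge_families_eq_zero {V : Type*} [Fintype V]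
    (G : SimpleGraph V) (W : Finset V) (hW : W ∈ nbhdComplex G)
    (e : Sym2 V) (he : e ∈ G.edgeFinset)
    (hbd : ¬ ∃ u v : V, e = s(u, v) ∧ u ∈ W ∧ v ∉ W) :
    ∑ F ∈ G.edgeFinset.powerset.filter (fun F : Finset (Sym2 V) =>
        W ∈ nbhdComplex (SimpleGraph.fromEdgeSet (↑F : Set (Sym2 V)))),
      (-1 : ℤ) ^ (G.edgeFinset.card - F.card) = 0 := by
  have hmem : ∀ {F : Finset (Sym2 V)} {F' : Finset (Sym2 V)},
      F' ⊆ G.edgeFinset → (∀ x, x ≠ e → (x ∈ F ↔ x ∈ F')) →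
      F ∈ G.edgeFinset.powerset.filter (fun F : Finset (Sym2 V) =>
        W ∈ nbhdComplex (SimpleGraph.fromEdgeSet (↑F : Set (Sym2 V)))) →
      F' ∈ G.edgeFinset.powerset.filter (fun F : Finset (Sym2 V) =>
        W ∈ nbhdComplex (SimpleGraph.fromEdgeSet (↑F : Set (Sym2 V)))) := by
    intro F F' hsub h hF
    rw [Finset.mem_filter, Finset.mem_powerset] at hF ⊢
    exact ⟨hsub, (mem_nbhdComplex_fromEdgeSet_iff_of_agree hbd h).1 hF.2⟩
  -- Adding `e` lowers the exponent by exactly one; `F ⊆ E` keeps the subtraction from truncating.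
  have hsign : ∀ F : Finset (Sym2 V), F ⊆ G.edgeFinset → e ∉ F →
      (-1 : ℤ) ^ (G.edgeFinset.card - F.card) +
        (-1 : ℤ) ^ (G.edgeFinset.card - (insert e F).card) = 0 := by
    intro F hF heF
    have hle := Finset.card_le_card (Finset.insert_subset he hF)
    rw [Finset.card_insert_of_notMem heF] at hle ⊢
    obtain ⟨k, hk⟩ := Nat.exists_eq_add_of_le hle
    have h1 : G.edgeFinset.card - F.card = k + 1 := by omega
    have h2 : G.edgeFinset.card - (F.card + 1) = k := by omega
    rw [h1, h2, pow_succ]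
    ring
  refine Finset.sum_involution (fun F _ => if e ∈ F then F.erase e else insert e F) ?_ ?_ ?_ ?_
  · intro F hF
    have hFE : F ⊆ G.edgeFinset := Finset.mem_powerset.1 (Finset.mem_filter.1 hF).1
    by_cases heF : e ∈ F
    · have := hsign (F.erase e) ((Finset.erase_subset _ _).trans hFE) (Finset.notMem_erase _ _)
      rw [Finset.insert_erase heF] at this
      simp only [if_pos heF]
      rw [add_comm]
      exact this
    · simp only [if_neg heF]
      exact hsign F hFE heF
  · intro F _ _ h
    by_cases heF : e ∈ F
    · rw [if_pos heF, Finset.erase_eq_self] at h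
      exact h heF
    · rw [if_neg heF, Finset.insert_eq_self] at h
      exact heF h
  · intro F hF
    have hFE : F ⊆ G.edgeFinset := Finset.mem_powerset.1 (Finset.mem_filter.1 hF).1
    by_cases heF : e ∈ F
    · simp only [if_pos heF]
      exact hmem ((Finset.erase_subset _ _).trans hFE) (fun x hx => by simp [hx]) hF
    · simp only [if_neg heF]
      exact hmem (Finset.insert_subset he hFE) (fun x hx => by simp [hx]) hF
  · intro F _
    by_cases heF : e ∈ F
    · simp [heF, Finset.insert_erase]
    · simp [heF, Finset.erase_insert]
end

section
/- For a finite simple graph G = (V, E) of order n, the number of non-dominating vertex subsets of G equals the number of sets in the neighborhood complex of the complement 𝐺̄; equivalently, 2^n − d(G) = N(𝐺̄, 1). -/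
/-- A set fails to dominate exactly when some vertex lies outside its closed neighborhood, i.e. when
that vertex is adjacent in the complement to every element of the set. -/
theorem not_isDominatingSet_iff {V : Type*} (G : SimpleGraph V) (W : Finset V) :
    ¬ IsDominatingSet G W ↔ ∃ v : V, ∀ u ∈ W, Gᶜ.Adj v u := by
  unfold IsDominatingSet
  push Not
  refine exists_congr fun v => ⟨fun h u hu => ?_, fun h => ⟨fun hv => ?_, fun w hw hwv => ?_⟩⟩
  · rw [SimpleGraph.compl_adj]
    exact ⟨fun e => h.1 (e ▸ hu), fun hvu => h.2 u hu hvu.symm⟩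
  · exact (h v hv).ne rfl
  · exact ((SimpleGraph.compl_adj G v w).1 (h w hw)).2 hwv.symm

open Classical in
theorem card_non_dominating_eq_card_nbhdComplex_compl {V : Type*} [Fintype V]
    (G : SimpleGraph V) :
    (Finset.univ.filter fun W : Finset V => ¬ IsDominatingSet G W).card =
        (nbhdComplex Gᶜ).card ∧
      (2 : ℤ) ^ Fintype.card V - (numDomSets G : ℤ) = ((nbhdComplex Gᶜ).card : ℤ) := by
  have h : (Finset.univ.filter fun W : Finset V => ¬ IsDominatingSet G W).card =
      (nbhdComplex Gᶜ).card := by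
    unfold nbhdComplex
    congr 1
    ext W
    simp only [Finset.mem_filter, Finset.mem_univ, true_and, not_isDominatingSet_iff]
  refine ⟨h, ?_⟩
  have hsum := Finset.card_filter_add_card_filter_not (s := (Finset.univ : Finset (Finset V)))
    (fun W => IsDominatingSet G W)
  rw [Finset.card_univ, Fintype.card_finset, h] at hsum
  have hcast : (numDomSets G : ℤ) + ((nbhdComplex Gᶜ).card : ℤ) = 2 ^ Fintype.card V := by
    exact_mod_cast hsum
  linarith
end
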